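/- arXiv:2101.12289 — 7 statements merged into one kernel-verified Lean document; each statement's English description precedes it below -/
import Mathlib

section
/- Let (α, 𝔄) be a standard Borel space. For each n ∈ ℕ, let π_n : α^n → (finite multisets over α) be the map sending a tuple (a_1, …, a_n) to the multiset {{a_1, …, a_n}}. Then a set A of finite multisets over α belongs to the counting σ-algebra 𝔠 if and only if for every n ∈ ℕ the preimage π_n⁻¹(A) is measurable with respect to the n-fold product σ-algebra 𝔄^{⊗n} on α^n. -/
open MeasureTheory

/- `bagCount F D` is `|D|_F`: the number of elements of the finite bag (multiset) `D`
that lie in the set `F`, counted with multiplicity. -/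
open Classical in
noncomputable def bagCount {α : Type*} (F : Set α) (D : Multiset α) : ℕ :=
  Multiset.countP (fun a => a ∈ F) D

/-- The counting event `#(F, n)`: all finite bags `D` with `|D|_F = n`. -/
def countingEvent {α : Type*} (F : Set α) (n : ℕ) : Set (Multiset α) :=
  {D : Multiset α | bagCount F D = n}

/-- The counting σ-algebra `𝔠` on finite bags (multisets) over a measurable space `α`:
the σ-algebra generated by the counting events `#(F, n)` for measurable `F ⊆ α` and `n ∈ ℕ`. -/
def countingSigmaAlgebra (α : Type*) [MeasurableSpace α] : MeasurableSpace (Multiset α) :=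
  MeasurableSpace.generateFrom
    {A : Set (Multiset α) | ∃ (F : Set α) (n : ℕ), MeasurableSet F ∧ A = countingEvent F n}

lemma sorted_le_iff_aux {α : Type*} (f : α → ℝ) (x : ℝ) (p : α → Bool)
    (hp : ∀ a, p a = true ↔ f a ≤ x) :
    ∀ (l : List α), l.Pairwise (fun a b => f a ≤ f b) → ∀ (i : ℕ) (hi : i < l.length),
      (f l[i] ≤ x ↔ i < l.countP p) := by
  intro l
  induction l with
  | nil => intro _ i hi; simp at hi
  | cons a l ih =>
    intro h i hi
    rw [List.pairwise_cons] at h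
    obtain ⟨h1, h2⟩ := h
    by_cases ha : f a ≤ x
    · rw [List.countP_cons_of_pos ((hp a).2 ha)]
      cases i with
      | zero => simp [ha]
      | succ i =>
        have := ih h2 i (by simpa using hi)
        simp only [List.getElem_cons_succ]
        rw [this]; omega
    · have h0 : List.countP p l = 0 := by
        rw [List.countP_eq_zero]
        intro b hb hpb
        exact ha ((h1 b hb).trans ((hp b).1 hpb))
      rw [List.countP_cons_of_neg (by rw [hp]; exact ha), h0]
      simp only [Nat.not_lt_zero, iff_false]
      cases i with
      | zero => simpa using ha
      | succ i =>
        intro hc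
        apply ha
        refine le_trans (h1 _ (List.getElem_mem (by simpa using hi))) hc

lemma measurable_bagCount_aux {α : Type*} [MeasurableSpace α] {F : Set α} (hF : MeasurableSet F) :
    @Measurable _ _ (countingSigmaAlgebra α) _ (bagCount F) := by
  letI := countingSigmaAlgebra α
  refine measurable_to_countable' fun n => ?_
  exact MeasurableSpace.measurableSet_generateFrom ⟨F, n, hF, rfl⟩

lemma measurable_ofFn_aux {α : Type*} [MeasurableSpace α] (n : ℕ) :
    @Measurable _ _ _ (countingSigmaAlgebra α)
      (fun t : Fin n → α => ((List.ofFn t : List α) : Multiset α)) := by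
  classical
  refine measurable_generateFrom ?_
  rintro _ ⟨F, k, hF, rfl⟩
  have h : ∀ t : Fin n → α, bagCount F ((List.ofFn t : List α) : Multiset α)
      = ∑ i, F.indicator (fun _ => (1 : ℕ)) (t i) := by
    intro t
    have : ∀ l : List α, bagCount F (l : Multiset α)
        = (l.map (F.indicator (fun _ => (1 : ℕ)))).sum := by
      intro l
      induction l with
      | nil => simp [bagCount]
      | cons a l ih =>
        simp only [bagCount, Multiset.coe_countP] at ih
        simp only [bagCount, Multiset.coe_countP, List.countP_cons, List.map_cons, List.sum_cons]
        rw [ih]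
        by_cases ha : a ∈ F <;> simp [ha, add_comm]
    rw [this, List.map_ofFn, List.sum_ofFn]
    rfl
  have hm : Measurable (fun t : Fin n → α => ∑ i, F.indicator (fun _ => (1 : ℕ)) (t i)) :=
    Finset.measurable_sum _ fun i _ =>
      (measurable_const.indicator hF).comp (measurable_pi_apply i)
  have := hm (MeasurableSet.singleton k)
  convert this using 1
  ext t
  simp [countingEvent, h]

/-- For a standard Borel space `α`, a set `A` of finite bags over `α`
belongs to the counting σ-algebra iff for every `n` the preimage of `A` under the map
`π_n : αⁿ → Multiset α`, `(a_1, …, a_n) ↦ {{a_1, …, a_n}}`, is measurable with respect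
to the `n`-fold product σ-algebra on `αⁿ`. -/
theorem mem_countingSigmaAlgebra_iff_measurable_preimage_ofFn
    {α : Type*} [MeasurableSpace α] [StandardBorelSpace α] (A : Set (Multiset α)) :
    MeasurableSet[countingSigmaAlgebra α] A ↔
      ∀ n : ℕ,
        MeasurableSet ((fun t : Fin n → α => ((List.ofFn t : List α) : Multiset α)) ⁻¹' A) := by
  classical
  constructor
  · intro hA n
    exact measurable_ofFn_aux n hA
  intro hA
  letI := countingSigmaAlgebra α
  obtain ⟨f, hf⟩ := MeasureTheory.exists_measurableEmbedding_real α
  have hsort : ∀ D : Multiset α, ∃ l : List α, (l : Multiset α) = D ∧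
      l.Pairwise (fun a b => f a ≤ f b) := by
    intro D
    letI : LinearOrder α := LinearOrder.lift' f hf.injective
    exact ⟨D.sort (· ≤ ·), Multiset.sort_eq _ _, Multiset.pairwise_sort _ _⟩
  choose s hs hsp using hsort
  have hlen : ∀ D, (s D).length = D.card := fun D => by
    conv_rhs => rw [← hs D]
    simp
  have hcard : ∀ n, MeasurableSet {D : Multiset α | D.card = n} := by
    intro n
    have := measurable_bagCount_aux (α := α) MeasurableSet.univ (MeasurableSet.singleton n)
    convert this using 1
    ext D
    simp [bagCount]
  have key : ∀ n, MeasurableSet (A ∩ {D : Multiset α | D.card = n}) := by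
    intro n
    let g : {D : Multiset α | D.card = n} → Fin n → α := fun D i =>
      (s D.1)[i.1]'(by rw [hlen, D.2]; exact i.2)
    have hg : Measurable g := by
      refine measurable_pi_lambda _ fun i => ?_
      rw [← hf.measurable_comp_iff]
      refine measurable_of_Iic fun x => ?_
      have hF : MeasurableSet (f ⁻¹' Set.Iic x) := hf.measurable measurableSet_Iic
      have h2 := ((measurable_bagCount_aux hF).comp
        (measurable_subtype_coe (p := fun D => D ∈ {D : Multiset α | D.card = n})))
        (measurableSet_Ioi (a := i.1))
      convert h2 using 1
      ext D
      have := sorted_le_iff_aux f x (fun a => decide (a ∈ f ⁻¹' Set.Iic x)) (by simp)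
        (s D.1) (hsp D.1) i.1 (by rw [hlen, D.2]; exact i.2)
      simp only [Set.mem_preimage, Function.comp, Set.mem_Iic, Set.mem_Ioi, g]
      rw [this]
      conv_rhs => rw [← hs D.1]
      simp [bagCount]
    have h3 := MeasurableSet.subtype_image (hcard n) (hg (hA n))
    convert h3 using 1
    have hofn : ∀ D : {D : Multiset α | D.card = n},
        ((List.ofFn (g D) : List α) : Multiset α) = D.1 := by
      intro D
      conv_rhs => rw [← hs D.1]
      congr 1
      apply List.ext_getElem
      · rw [List.length_ofFn, hlen, D.2]
      · intro i h1 h2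
        simp [g]
    ext D
    constructor
    · rintro ⟨h1, h2⟩
      refine ⟨⟨D, h2⟩, ?_, rfl⟩
      simp only [Set.mem_preimage]
      rw [hofn]; exact h1
    · rintro ⟨D', h1, rfl⟩
      simp only [Set.mem_preimage] at h1
      rw [hofn] at h1
      exact ⟨h1, D'.2⟩
  have : A = ⋃ n, A ∩ {D : Multiset α | D.card = n} := by
    ext D; simp
  rw [this]
  exact MeasurableSet.iUnion key
end

section
/- Let (α, 𝔄) be a standard Borel space. Then the set of all duplicate-free finite multisets over α (that is, finite multisets in which every element has multiplicity 1, corresponding to set instances) belongs to the counting σ-algebra 𝔠 on finite multisets over α. -/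
open MeasureTheory

lemma nodup_iff_cells {α : Type*} (f : α → ℕ → Bool) (hf : Function.Injective f)
    (D : Multiset α) :
    D.Nodup ↔ ∃ n : ℕ, ∀ p : Fin n → Bool, bagCount {a | ∀ i : Fin n, f a i = p i} D ≤ 1 := by
  classical
  constructor
  · intro hD
    have key : ∀ q : α × α, ∃ N : ℕ, (∀ i < N, f q.1 i = f q.2 i) → q.1 = q.2 := by
      intro q
      by_cases h : q.1 = q.2
      · exact ⟨0, fun _ => h⟩
      · obtain ⟨i, hi⟩ := Function.ne_iff.mp (hf.ne h)
        exact ⟨i + 1, fun H => absurd (H i (Nat.lt_succ_self i)) hi⟩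
    choose N hN using key
    refine ⟨(D.toFinset ×ˢ D.toFinset).sup N, fun p => ?_⟩
    unfold bagCount
    rw [Multiset.countP_eq_card_filter]
    have hnd := hD.filter (fun a => a ∈ {a | ∀ i : Fin _, f a i = p i})
    have h1 : (⟨_, hnd⟩ : Finset α).card ≤ 1 := by
      rw [Finset.card_le_one]
      intro a ha b hb
      simp only [Finset.mem_mk, Multiset.mem_filter, Set.mem_setOf_eq] at ha hb
      apply hN (a, b)
      intro i hi
      have hle : N (a, b) ≤ (D.toFinset ×ˢ D.toFinset).sup N :=
        Finset.le_sup (f := N) (by simp [ha.1, hb.1])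
      exact (ha.2 ⟨i, hi.trans_le hle⟩).trans (hb.2 ⟨i, hi.trans_le hle⟩).symm
    rw [Finset.card_mk] at h1
    convert h1
  · rintro ⟨n, hn⟩
    rw [Multiset.nodup_iff_ne_cons_cons]
    rintro a t rfl
    have := hn (fun i => f a i)
    simp [bagCount] at this

lemma measurable_bagCount {α : Type*} [MeasurableSpace α] {F : Set α} (hF : MeasurableSet F) :
    Measurable[countingSigmaAlgebra α] (bagCount F) := by
  letI := countingSigmaAlgebra α
  refine measurable_to_countable' fun n => ?_
  exact MeasurableSpace.measurableSet_generateFrom ⟨F, n, hF, rfl⟩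

/-- For a standard Borel space `α`, the set of duplicate-free finite
bags over `α` (i.e. the set instances, in which every element has multiplicity 1)
belongs to the counting σ-algebra. -/
theorem measurableSet_nodup_of_standardBorel
    {α : Type*} [MeasurableSpace α] [StandardBorelSpace α] :
    MeasurableSet[countingSigmaAlgebra α] {D : Multiset α | D.Nodup} := by
  letI := countingSigmaAlgebra α
  obtain ⟨f, hfm, hf⟩ := MeasurableSpace.measurable_injection_nat_bool_of_countablySeparated α
  have : {D : Multiset α | D.Nodup} = ⋃ n : ℕ, ⋂ p : Fin n → Bool,
      (bagCount {a | ∀ i : Fin n, f a i = p i}) ⁻¹' Set.Iic 1 := by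
    ext D
    simp [nodup_iff_cells f hf D]
  rw [this]
  refine MeasurableSet.iUnion fun n => MeasurableSet.iInter fun p => ?_
  refine measurable_bagCount ?_ measurableSet_Iic
  rw [Set.setOf_forall]
  refine MeasurableSet.iInter fun i => ?_
  exact (measurable_pi_iff.mp hfm i) (measurableSet_singleton (p i))
end

section
/- Let (α, 𝔄) be a measurable space and let S ∈ 𝔄. Then the selection map Q on finite multisets over α, which sends a multiset D to the sub-multiset of those elements of D that lie in S (retaining multiplicities), is measurable with respect to the counting σ-algebra 𝔠 on both domain and codomain. -/
open MeasureTheory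

/- **Statement 6.** For a measurable space `α` and a measurable set `S ⊆ α`, the
selection map sending a finite bag `D` to the sub-bag of elements of `D` lying in `S`
(retaining multiplicities) is measurable w.r.t. the counting σ-algebra on both sides. -/
open Classical in
theorem measurable_selection {α : Type*} [MeasurableSpace α]
    (S : Set α) (hS : MeasurableSet S) :
    @Measurable (Multiset α) (Multiset α) (countingSigmaAlgebra α) (countingSigmaAlgebra α)
      (fun D : Multiset α => D.filter (fun a => a ∈ S)) := by
  refine @measurable_generateFrom _ _ (countingSigmaAlgebra α) _ _ ?_
  rintro _ ⟨F, n, hF, rfl⟩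
  refine MeasurableSpace.measurableSet_generateFrom ⟨F ∩ S, n, hF.inter hS, ?_⟩
  ext D
  simp only [countingEvent, bagCount, Set.mem_preimage, Set.mem_setOf_eq,
    Multiset.countP_filter, Set.mem_inter_iff]
end

section
/- Let (U, 𝔄_U) be the Borel measurable space of a separable metric space U, let α = U × U carry the product σ-algebra 𝔄_U ⊗ 𝔄_U, and let Δ = {(x, x) : x ∈ U} be the diagonal. Then the equality-selection query Q on finite multisets over α, which sends a multiset D of pairs to the sub-multiset of those pairs (x, y) ∈ D with x = y (retaining multiplicities), is measurable with respect to the counting σ-algebra 𝔠 on finite multisets over α, on both domain and codomain. -/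
open MeasureTheory

/- **Statement 7.** Let `U` be a separable metric space with its Borel σ-algebra, and
let `U × U` carry the product σ-algebra. The equality-selection query, sending a finite
bag of pairs `D` to the sub-bag of pairs `(x, y) ∈ D` with `x = y` (retaining
multiplicities), is measurable w.r.t. the counting σ-algebra on both sides. -/
open Classical in
theorem measurable_equality_selection
    {U : Type*} [MetricSpace U] [TopologicalSpace.SeparableSpace U]
    [MeasurableSpace U] [BorelSpace U] :
    @Measurable (Multiset (U × U)) (Multiset (U × U))
      (countingSigmaAlgebra (U × U)) (countingSigmaAlgebra (U × U))
      (fun D : Multiset (U × U) => D.filter (fun p => p.1 = p.2)) := by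
  haveI : SecondCountableTopology U := UniformSpace.secondCountable_of_separable U
  have hd : MeasurableSet {p : U × U | p.1 = p.2} :=
    measurableSet_eq_fun measurable_fst measurable_snd
  refine @measurable_generateFrom _ _ (countingSigmaAlgebra (U × U)) _ _ ?_
  rintro _ ⟨F, n, hF, rfl⟩
  refine MeasurableSpace.measurableSet_generateFrom
    ⟨F ∩ {p : U × U | p.1 = p.2}, n, hF.inter hd, ?_⟩
  ext D
  simp only [countingEvent, bagCount, Set.mem_preimage, Set.mem_setOf_eq, Multiset.countP_filter,
    Set.mem_inter_iff]
end

section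
/- Let (α, 𝔄) and (β, 𝔅) be measurable spaces and let f : α → β be a measurable function. Then the projection map on finite multisets, which sends a finite multiset D over α to its image multiset f(D) over β (applying f elementwise, retaining multiplicities), is measurable with respect to the counting σ-algebra 𝔠_α on finite multisets over α and the counting σ-algebra 𝔠_β on finite multisets over β. -/
open MeasureTheory

/-- For measurable spaces `α`, `β` and a measurable `f : α → β`, the
projection map sending a finite bag `D` over `α` to its elementwise image bag `f(D)`
over `β` (retaining multiplicities) is measurable w.r.t. the counting σ-algebras. -/
theorem measurable_projection {α β : Type*} [MeasurableSpace α] [MeasurableSpace β]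
    (f : α → β) (hf : Measurable f) :
    @Measurable (Multiset α) (Multiset β) (countingSigmaAlgebra α) (countingSigmaAlgebra β)
      (fun D : Multiset α => D.map f) := by
  refine @measurable_generateFrom _ _ (countingSigmaAlgebra α) _ _ ?_
  rintro A ⟨F, n, hF, rfl⟩
  refine MeasurableSpace.measurableSet_generateFrom ⟨f ⁻¹' F, n, hf hF, ?_⟩
  ext D
  change bagCount F (D.map f) = n ↔ bagCount (f ⁻¹' F) D = n
  unfold bagCount
  rw [Multiset.countP_map, Multiset.countP_eq_card_filter]
  rfl
end

section
/- Let (α, 𝔄) be a measurable space. Then the bag-union map, which sends a pair (D, E) of finite multisets over α to their multiset sum D + E (in which the multiplicity of each element is the sum of its multiplicities in D and in E), is measurable with respect to the product σ-algebra 𝔠 ⊗ 𝔠 of the counting σ-algebra on the domain and the counting σ-algebra 𝔠 on the codomain. -/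
open MeasureTheory

/-- For a measurable space `α`, the bag-union map, sending a pair
`(D, E)` of finite bags over `α` to their multiset sum `D + E` (multiplicities add),
is measurable w.r.t. the product of the counting σ-algebras on the domain and the
counting σ-algebra on the codomain. -/
theorem measurable_bag_union {α : Type*} [MeasurableSpace α] :
    @Measurable (Multiset α × Multiset α) (Multiset α)
      (@Prod.instMeasurableSpace _ _ (countingSigmaAlgebra α) (countingSigmaAlgebra α))
      (countingSigmaAlgebra α)
      (fun p : Multiset α × Multiset α => p.1 + p.2) := by
  letI : MeasurableSpace (Multiset α) := countingSigmaAlgebra α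
  have hc : ∀ F : Set α, MeasurableSet F →
      Measurable (fun D : Multiset α => bagCount F D) := by
    intro F hF
    refine measurable_to_countable' fun n => ?_
    exact MeasurableSpace.measurableSet_generateFrom ⟨F, n, hF, rfl⟩
  refine measurable_generateFrom ?_
  rintro A ⟨F, n, hF, rfl⟩
  have h : Measurable (fun p : Multiset α × Multiset α => bagCount F p.1 + bagCount F p.2) :=
    ((hc F hF).comp measurable_fst).add ((hc F hF).comp measurable_snd)
  have h2 := h (measurableSet_singleton n)
  convert h2 using 1
  ext p
  simp [countingEvent, bagCount, Multiset.countP_add]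
end

section
/- Let (α, 𝔄) be a standard Borel space. Then the duplicate-elimination map, which sends a finite multiset D over α to the duplicate-free multiset dedup(D) containing each element of D exactly once (converting a bag instance into a set instance), is measurable with respect to the counting σ-algebra 𝔠 on finite multisets over α, on both domain and codomain. -/
open MeasureTheory

open Classical in
theorem bagCount_meas {α : Type*} [MeasurableSpace α] {F : Set α} (hF : MeasurableSet F) :
    @Measurable (Multiset α) ℕ (countingSigmaAlgebra α) _ (fun D => bagCount F D) := by
  letI := countingSigmaAlgebra α
  refine measurable_to_countable' fun n => ?_
  exact MeasurableSpace.measurableSet_generateFrom ⟨F, n, hF, rfl⟩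

open Classical in
theorem bagCount_dedup_eq {α : Type*} (F : Set α) (D : Multiset α) :
    bagCount F D.dedup = (D.toFinset.filter (· ∈ F)).card := by
  simp only [bagCount, Multiset.countP_eq_card_filter]
  rfl

open Classical in
theorem card_image_eq_sum {α : Type*} (F : Set α) (D : Multiset α) {m : ℕ}
    (g : α → Fin m → Bool) :
    ((D.toFinset.filter (· ∈ F)).image g).card
      = ∑ c : Fin m → Bool, min 1 (bagCount (F ∩ g ⁻¹' {c}) D) := by
  rw [Finset.card_eq_sum_ones, ← Finset.sum_filter_add_sum_filter_not Finset.univ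
    (fun c => c ∈ (D.toFinset.filter (· ∈ F)).image g)]
  have h1 : ∀ c, c ∈ (D.toFinset.filter (· ∈ F)).image g ↔
      0 < bagCount (F ∩ g ⁻¹' {c}) D := by
    intro c
    simp [bagCount, Multiset.countP_pos, and_assoc]
  rw [Finset.sum_eq_zero (s := Finset.univ.filter (fun c => ¬ _)), add_zero]
  · refine Finset.sum_congr (by ext; simp) ?_
    intro c hc
    have := (h1 c).1 (by simpa using hc)
    omega
  · intro c hc
    have := mt (h1 c).2 (Finset.mem_filter.1 hc).2
    omega

open Classical in
theorem bagCount_dedup_meas {α : Type*} [MeasurableSpace α] [StandardBorelSpace α]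
    {F : Set α} (hF : MeasurableSet F) :
    @Measurable (Multiset α) ℕ (countingSigmaAlgebra α) _ (fun D => bagCount F D.dedup) := by
  letI := countingSigmaAlgebra α
  obtain ⟨f, hf, hinj⟩ := MeasurableSpace.measurable_injection_nat_bool_of_countablySeparated α
  let g : (m : ℕ) → α → Fin m → Bool := fun m x i => f x i
  have hg : ∀ m, Measurable (g m) := fun m =>
    measurable_pi_lambda _ fun i => (measurable_pi_apply _).comp hf
  refine measurable_of_tendsto_metrizable
    (f := fun m D => ((D.toFinset.filter (· ∈ F)).image (g m)).card) (fun m => ?_) ?_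
  · simp only [card_image_eq_sum]
    refine Finset.measurable_sum _ fun c _ => ?_
    exact measurable_const.min (bagCount_meas (hF.inter (hg m (measurableSet_singleton c))))
  · rw [tendsto_pi_nhds]
    intro D
    have key : ∀ᶠ m in Filter.atTop, ∀ x ∈ D.toFinset, ∀ y ∈ D.toFinset,
        g m x = g m y → x = y := by
      rw [Filter.eventually_all_finset]
      intro x _
      rw [Filter.eventually_all_finset]
      intro y _
      by_cases hxy : x = y
      · simp [hxy]
      · obtain ⟨k, hk⟩ := Function.ne_iff.1 (hinj.ne hxy)
        filter_upwards [Filter.eventually_gt_atTop k] with m hm h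
        exact absurd (congrFun h ⟨k, hm⟩) hk
    refine Filter.Tendsto.congr' ?_ tendsto_const_nhds
    filter_upwards [key] with m hm
    rw [bagCount_dedup_eq, Finset.card_image_of_injOn]
    intro x hx y hy h
    exact hm x (Finset.mem_filter.1 hx).1 y (Finset.mem_filter.1 hy).1 h

/- **Statement 11.** For a standard Borel space `α`, the duplicate-elimination map,
sending a finite bag `D` over `α` to the duplicate-free bag `D.dedup` containing each
element of `D` exactly once, is measurable w.r.t. the counting σ-algebra on both sides. -/
open Classical in
theorem measurable_dedup {α : Type*} [MeasurableSpace α] [StandardBorelSpace α] :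
    @Measurable (Multiset α) (Multiset α) (countingSigmaAlgebra α) (countingSigmaAlgebra α)
      (fun D : Multiset α => D.dedup) := by
  letI := countingSigmaAlgebra α
  refine measurable_generateFrom ?_
  rintro _ ⟨F, n, hF, rfl⟩
  exact bagCount_dedup_meas hF (measurableSet_singleton n)
end
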